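/- arXiv:2310.13443 — 2 statements merged into one kernel-verified Lean document; each statement's English description precedes it below -/
import Mathlib

section
/- (Formal Puiseux theorem) Let $\k$ be an algebraically closed field of characteristic different from a prime $p$, and $K = \k((z))$. Inside a fixed algebraic closure of $K$, there is exactly one field extension of $K$ of degree $p$; it is Galois with cyclic Galois group and is generated by a $p$-th root of any element of $K^*$ which is not a $p$-th power. -/
theorem aux_root {R : Type*} [CommRing R] (p : ℕ) (hp : p ≠ 0) (hu : IsUnit (p : R))
    (f : PowerSeries R) (c : R) (hc : IsUnit c) (h : PowerSeries.constantCoeff f = c ^ p) :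
    ∃ g : PowerSeries R, g ^ p = f := by
  have H : HenselianRing (PowerSeries R) (Ideal.span {PowerSeries.X}) := inferInstance
  obtain ⟨g, hg, -⟩ := H.is_henselian (Polynomial.X ^ p - Polynomial.C f)
    (Polynomial.monic_X_pow_sub_C f hp) (PowerSeries.C c) (by
      rw [Ideal.mem_span_singleton, PowerSeries.X_dvd_iff]
      simp [h]) (by
      apply IsUnit.map
      have h1 : IsUnit (PowerSeries.C ((p : R) * c ^ (p - 1))) :=
        (hu.mul (hc.pow _)).map (PowerSeries.C (R := R))
      simpa [Polynomial.derivative_X_pow] using h1)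
  refine ⟨g, ?_⟩
  simpa [Polynomial.IsRoot, sub_eq_zero] using hg

theorem aux_complete (k : Type*) [Field k] :
    IsAdicComplete (IsLocalRing.maximalIdeal (PowerSeries k)) (PowerSeries k) := by
  rw [PowerSeries.maximalIdeal_eq_span_X]
  infer_instance

open Polynomial in
theorem aux_W {A K : Type*} [CommRing A] [IsLocalRing A] [IsDomain A]
    [IsAdicComplete (IsLocalRing.maximalIdeal A) A] [Field K] [Algebra A K] [IsFractionRing A K]
    (F : A[X]) (hF : Irreducible (F.map (algebraMap A K)))
    (h0 : F.coeff 0 ∈ IsLocalRing.maximalIdeal A) (i : ℕ) (hi : i < F.natDegree) :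
    F.coeff i ∈ IsLocalRing.maximalIdeal A := by
  by_contra hcon
  have hne : (F : PowerSeries A).map (IsLocalRing.residue A) ≠ 0 := by
    intro h
    have := congrArg (PowerSeries.coeff i) h
    simp [IsLocalRing.residue_eq_zero_iff] at this
    exact hcon (by simpa using this)
  obtain ⟨d, h, H⟩ := PowerSeries.exists_isWeierstrassFactorization hne
  have hdm := H.isDistinguishedAt.monic
  have hdeg := H.natDegree_eq_toNat_order_map
  have hle : d.natDegree ≤ i := by
    rw [hdeg]
    apply ENat.toNat_le_of_le_natCast
    apply PowerSeries.order_le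
    rw [PowerSeries.coeff_map, Polynomial.coeff_coe, Ne, IsLocalRing.residue_eq_zero_iff]
    exact hcon
  have hpos : d.natDegree ≠ 0 := by
    intro h0'
    have hd1 : d = 1 := hdm.natDegree_eq_zero.1 h0'
    have h2 := H.eq_mul
    rw [hd1] at h2
    have h3 : IsUnit (F : PowerSeries A) := by rw [h2]; simpa using H.isUnit
    rw [PowerSeries.isUnit_iff_constantCoeff] at h3
    simp at h3
    exact (IsLocalRing.mem_maximalIdeal _).1 h0 h3
  have hdvd : d ∣ F := by
    rw [← Polynomial.modByMonic_eq_zero_iff_dvd hdm]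
    have hD := H.isDistinguishedAt.isWeierstrassDivisorAt'
    have hord : ((d : PowerSeries A).map
        (Ideal.Quotient.mk (IsLocalRing.maximalIdeal A))).order.toNat = d.natDegree := by
      have := H.isDistinguishedAt.coe_natDegree_eq_order_map (d : PowerSeries A) 1
        (by simp) (by simp)
      rw [← this]; simp
    refine (hD.eq_of_mul_add_eq_mul_add (q := ((F /ₘ d : A[X]) : PowerSeries A)) (q' := h)
      (r := F %ₘ d) (r' := 0) ?_ ?_ ?_).2
    · rw [hord, ← Polynomial.degree_eq_natDegree hdm.ne_zero]
      exact Polynomial.degree_modByMonic_lt _ hdm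
    · simp [hord]
    · rw [← Polynomial.coe_mul, ← Polynomial.coe_add, add_comm, Polynomial.modByMonic_add_div,
        H.eq_mul]
      simp
  obtain ⟨q, hq⟩ := hdvd
  have hF' := hF
  rw [hq, Polynomial.map_mul] at hF'
  have inj := IsFractionRing.injective A K
  rcases hF'.isUnit_or_isUnit rfl with hu | hu
  · have := Polynomial.natDegree_eq_zero_of_isUnit hu
    rw [Polynomial.natDegree_map_eq_of_injective inj] at this
    exact hpos this
  · have := Polynomial.natDegree_eq_zero_of_isUnit hu
    rw [Polynomial.natDegree_map_eq_of_injective inj] at this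
    have h2 : F.natDegree ≤ d.natDegree + q.natDegree := hq ▸ Polynomial.natDegree_mul_le
    omega

open Polynomial in
theorem aux_int {A K : Type*} [CommRing A] [IsDomain A] [ValuationRing A]
    [IsAdicComplete (IsLocalRing.maximalIdeal A) A] [Field K] [Algebra A K] [IsFractionRing A K]
    (f : K[X]) (hm : f.Monic) (hf : Irreducible f) (a : A) (h0 : f.coeff 0 = algebraMap A K a) :
    ∃ F : A[X], F.Monic ∧ F.map (algebraMap A K) = f := by
  have inj := IsFractionRing.injective A K
  suffices h : f ∈ Polynomial.lifts (algebraMap A K) by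
    obtain ⟨F, h1, -, h3⟩ := Polynomial.lifts_and_degree_eq_and_monic h hm
    exact ⟨F, h3, h1⟩
  obtain ⟨i, hi, hmax⟩ := Finset.exists_max_image f.support
    (fun i => ValuationRing.valuation A K (f.coeff i)) (Polynomial.support_nonempty.2 hf.ne_zero)
  have hi0 : f.coeff i ≠ 0 := by simpa using hi
  have key : ∀ j, ∃ b : A, algebraMap A K b = f.coeff j / f.coeff i := by
    intro j
    have : ValuationRing.valuation A K (f.coeff j / f.coeff i) ≤ 1 := by
      rw [map_div₀]
      apply div_le_one_of_le₀ _ zero_le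
      by_cases hj : f.coeff j = 0
      · simp [hj]
      · exact hmax j (by simpa using hj)
    exact (ValuationRing.mem_integer_iff A K _).1 this
  by_cases hint : ∃ b : A, algebraMap A K b = f.coeff i
  · obtain ⟨b, hb⟩ := hint
    rw [Polynomial.lifts_iff_coeff_lifts]
    intro j
    obtain ⟨c, hc⟩ := key j
    exact ⟨b * c, by rw [map_mul, hb, hc]; field_simp⟩
  · exfalso
    have hg : C (f.coeff i)⁻¹ * f ∈ Polynomial.lifts (algebraMap A K) := by
      rw [Polynomial.lifts_iff_coeff_lifts]
      intro j
      obtain ⟨c, hc⟩ := key j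
      exact ⟨c, by rw [hc, coeff_C_mul]; field_simp⟩
    obtain ⟨F, hF⟩ := (Polynomial.mem_lifts _).1 hg
    have hu : IsUnit (C (f.coeff i)⁻¹) := Polynomial.isUnit_C.2 (isUnit_iff_ne_zero.2 (inv_ne_zero hi0))
    have hirr : Irreducible (F.map (algebraMap A K)) := by
      rw [hF]; exact (irreducible_isUnit_mul hu).2 hf
    have hdeg : F.natDegree = f.natDegree := by
      rw [← Polynomial.natDegree_map_eq_of_injective inj, hF,
        Polynomial.natDegree_C_mul (inv_ne_zero hi0)]
    have hci : ∀ j, algebraMap A K (F.coeff j) = (f.coeff i)⁻¹ * f.coeff j := by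
      intro j
      rw [← Polynomial.coeff_map, hF, coeff_C_mul]
    have h1 : F.coeff i = 1 := inj (by rw [hci, map_one, inv_mul_cancel₀ hi0])
    obtain ⟨c, hc⟩ : ∃ c : A, algebraMap A K c = (f.coeff i)⁻¹ := by
      rcases ValuationRing.isInteger_or_isInteger A (f.coeff i) with h | h
      · exact absurd h hint
      · exact h
    have hcm : c ∈ IsLocalRing.maximalIdeal A := by
      rw [IsLocalRing.mem_maximalIdeal]
      rintro ⟨u, rfl⟩
      apply hint
      refine ⟨(↑u⁻¹ : A), ?_⟩
      rw [← inv_inj, ← hc, map_units_inv]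
      simp
    have h0m : F.coeff 0 ∈ IsLocalRing.maximalIdeal A := by
      have : F.coeff 0 = c * a := inj (by rw [hci, map_mul, hc, h0])
      rw [this]; exact Ideal.mul_mem_right _ _ hcm
    have hilt : i < F.natDegree := by
      rw [hdeg]
      refine lt_of_le_of_ne (Polynomial.le_natDegree_of_ne_zero hi0) ?_
      rintro rfl
      exact hint ⟨1, by rw [map_one]; exact hm.symm⟩
    have := aux_W (K := K) F hirr h0m i hilt
    rw [h1] at this
    exact (IsLocalRing.mem_maximalIdeal _).1 this isUnit_one

open Polynomial in
theorem aux_eval {A E : Type*} [CommRing A] [CommRing E] (I : Ideal A) [IsAdicComplete I A]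
    (F : A[X]) (hF : F.IsDistinguishedAt I) (φ : A →+* E) (γ : E) (h : F.eval₂ φ γ = 0) :
    ∃ ψ : PowerSeries A →+* E, ψ PowerSeries.X = γ ∧ ∀ a, ψ (PowerSeries.C a) = φ a := by
  let L : (A[X] ⧸ Ideal.span {F}) →+* E := Ideal.Quotient.lift _ (eval₂RingHom φ γ) (by
    intro a ha
    obtain ⟨b, rfl⟩ := Ideal.mem_span_singleton'.1 ha
    simp [Polynomial.eval₂_mul, h])
  let e := hF.algEquivQuotient
  let ψ : PowerSeries A →+* E :=
    (L.comp e.symm.toAlgHom.toRingHom).comp (Ideal.Quotient.mk _)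
  have key : ∀ g : A[X], ψ (g : PowerSeries A) = g.eval₂ φ γ := by
    intro g
    have : e (Ideal.Quotient.mk _ g) = Ideal.Quotient.mk _ (g : PowerSeries A) := by
      simp [e, Polynomial.IsDistinguishedAt.algEquivQuotient]
    have h2 : e.symm (Ideal.Quotient.mk _ (g : PowerSeries A)) = Ideal.Quotient.mk _ g := by
      rw [← this, AlgEquiv.symm_apply_apply]
    change L (e.symm (Ideal.Quotient.mk _ (g : PowerSeries A))) = _
    rw [h2]
    simp [L]
  refine ⟨ψ, ?_, fun a => ?_⟩
  · rw [← Polynomial.coe_X, key]; simp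
  · rw [← Polynomial.coe_C, key]; simp

open Polynomial in
theorem aux_five (k : Type*) [Field k] [IsAlgClosed k] (p : ℕ) (hp : p.Prime)
    (hchar : (p : k) ≠ 0) (E : Type*) [Field E] [Algebra (LaurentSeries k) E]
    (hE : Module.finrank (LaurentSeries k) E = p) (β : E)
    (hN : Algebra.norm (LaurentSeries k) β = 1) :
    Algebra.trace (LaurentSeries k) E β ≠ 0 ∧ ∃ ε : E, ε ^ p = β := by
  have hpK : (p : LaurentSeries k) ≠ 0 := by
    have := (map_ne_zero (algebraMap k (LaurentSeries k))).2 hchar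
    simpa using this
  have hpA : IsUnit (p : PowerSeries k) := by
    have := (IsUnit.mk0 _ hchar).map (PowerSeries.C (R := k))
    simpa using this
  have : NeZero p := ⟨hp.ne_zero⟩
  have : NeZero (p : k) := ⟨hchar⟩
  have hfin : FiniteDimensional (LaurentSeries k) E :=
    Module.finite_of_finrank_pos (hE ▸ hp.pos)
  have hcomp := aux_complete k
  by_cases hb : β ∈ (⊥ : IntermediateField (LaurentSeries k) E)
  · obtain ⟨b, rfl⟩ := IntermediateField.mem_bot.1 hb
    rw [Algebra.norm_algebraMap, hE] at hN
    constructor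
    · rw [Algebra.trace_algebraMap, hE, nsmul_eq_mul]
      refine mul_ne_zero hpK ?_
      rintro rfl
      simp [hp.ne_zero] at hN
    · obtain ⟨ζ, hζ⟩ := HasEnoughRootsOfUnity.exists_primitiveRoot k p
      have hζ' := hζ.map_of_injective (algebraMap k (LaurentSeries k)).injective
      obtain ⟨i, -, rfl⟩ := hζ'.eq_pow_of_pow_eq_one hN
      obtain ⟨r, hr⟩ := IsAlgClosed.exists_pow_nat_eq (ζ ^ i) hp.pos
      refine ⟨algebraMap _ E (algebraMap k (LaurentSeries k) r), ?_⟩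
      rw [← map_pow, ← map_pow, hr, map_pow]
  · have htop : IntermediateField.adjoin (LaurentSeries k) {β} = ⊤ := by
      have := IntermediateField.isSimpleOrder_of_finrank_prime (LaurentSeries k) E (hE ▸ hp)
      rcases eq_bot_or_eq_top (IntermediateField.adjoin (LaurentSeries k) {β}) with h | h
      · exact absurd (IntermediateField.adjoin_simple_eq_bot_iff.1 h) hb
      · exact h
    have hint : IsIntegral (LaurentSeries k) β := IsIntegral.of_finite _ β
    have hdeg : (minpoly (LaurentSeries k) β).natDegree = p := by
      rw [← IntermediateField.adjoin.finrank hint, htop, IntermediateField.finrank_top', hE]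
    have halg : Algebra.adjoin (LaurentSeries k) {β} = ⊤ := by
      rw [← IntermediateField.adjoin_simple_toSubalgebra_of_isAlgebraic hint.isAlgebraic, htop]
      rfl
    have hn0 := Algebra.PowerBasis.norm_gen_eq_coeff_zero_minpoly
      (PowerBasis.ofAdjoinEqTop hint halg)
    have htr := PowerBasis.trace_gen_eq_nextCoeff_minpoly (PowerBasis.ofAdjoinEqTop hint halg)
    rw [PowerBasis.ofAdjoinEqTop_gen] at hn0 htr
    rw [hN, PowerBasis.ofAdjoinEqTop_dim, hdeg] at hn0
    have hc0 : (minpoly (LaurentSeries k) β).coeff 0 =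
        algebraMap (PowerSeries k) (LaurentSeries k) ((-1) ^ p) := by
      rw [map_pow, map_neg, map_one]
      have h2 : ((-1 : LaurentSeries k) ^ p) * (-1) ^ p = 1 := by
        rw [← mul_pow]; simp
      calc _ = ((-1 : LaurentSeries k) ^ p * (-1) ^ p) * _ := by rw [h2, one_mul]
        _ = _ := by rw [mul_assoc, ← hn0, mul_one]
    obtain ⟨G, hGm, hG⟩ := aux_int (A := PowerSeries k) _ (minpoly.monic hint)
      (minpoly.irreducible hint) _ hc0
    have inj := IsFractionRing.injective (PowerSeries k) (LaurentSeries k)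
    have hGd : G.natDegree = p := by
      rw [← Polynomial.natDegree_map_eq_of_injective inj, hG, hdeg]
    have hG0 : G.coeff 0 = (-1) ^ p := inj (by rw [← coeff_map, hG, hc0])
    -- root of the reduction
    obtain ⟨c, hc⟩ := IsAlgClosed.exists_root (G.map (PowerSeries.constantCoeff (R := k))) (by
      rw [hGm.degree_map, Polynomial.degree_eq_natDegree hGm.ne_zero, hGd]
      exact_mod_cast hp.ne_zero)
    have hmem : ∀ a : PowerSeries k, a ∈ IsLocalRing.maximalIdeal (PowerSeries k) ↔
        PowerSeries.constantCoeff a = 0 := by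
      intro a
      rw [PowerSeries.maximalIdeal_eq_span_X, Ideal.mem_span_singleton, PowerSeries.X_dvd_iff]
    have hcne : c ≠ 0 := by
      rintro rfl
      rw [IsRoot, ← coeff_zero_eq_eval_zero, coeff_map, hG0] at hc
      simp at hc
    let F : (PowerSeries k)[X] := G.comp (X + C (PowerSeries.C c))
    have hFm : F.Monic := hGm.comp_X_add_C _
    have hFd : F.natDegree = p := by
      simp [F, Polynomial.natDegree_comp, hGd]
    have hFirr : Irreducible (F.map (algebraMap (PowerSeries k) (LaurentSeries k))) := by
      have h1 : F.map (algebraMap (PowerSeries k) (LaurentSeries k)) =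
          Polynomial.algEquivAevalXAddC (algebraMap (PowerSeries k) (LaurentSeries k)
            (PowerSeries.C c)) (minpoly (LaurentSeries k) β) := by
        simp only [F, Polynomial.map_comp, hG]
        simp [Polynomial.comp, Polynomial.aeval_def]
      rw [h1]
      exact (MulEquiv.irreducible_iff _).2 (minpoly.irreducible hint)
    have hF0 : F.coeff 0 ∈ IsLocalRing.maximalIdeal (PowerSeries k) := by
      rw [hmem, coeff_zero_eq_eval_zero]
      simp only [F, eval_comp, eval_add, eval_X, eval_C, zero_add]
      rw [IsRoot, eval_map] at hc
      have : PowerSeries.constantCoeff (PowerSeries.C c) = c := by simp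
      rw [← hc]
      conv_rhs => rw [← this]
      rw [Polynomial.eval₂_at_apply]
    have hFc := aux_W (K := LaurentSeries k) F hFirr hF0
    have hFdist : F.IsDistinguishedAt (IsLocalRing.maximalIdeal (PowerSeries k)) :=
      ⟨⟨fun h => hFc _ h⟩, hFm⟩
    constructor
    · intro h0
      rw [htr, neg_eq_zero, ← hG, Polynomial.nextCoeff_map inj, map_eq_zero_iff _ inj] at h0
      have h1 : (G.map (PowerSeries.constantCoeff (R := k))).comp (X + C c) = X ^ p := by
        have h2 : (G.map (PowerSeries.constantCoeff (R := k))).comp (X + C c) =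
            F.map (PowerSeries.constantCoeff (R := k)) := by
          simp only [F, Polynomial.map_comp]
          simp
        rw [h2]
        ext i
        rw [coeff_map, coeff_X_pow]
        rcases lt_trichotomy i p with hi | hi | hi
        · rw [if_neg hi.ne, ← hmem]
          exact hFc i (hFd ▸ hi)
        · rw [if_pos hi, hi]
          have : F.coeff p = 1 := by
            have := hFm.coeff_natDegree
            rwa [hFd] at this
          rw [this, map_one]
        · rw [if_neg hi.ne', coeff_eq_zero_of_natDegree_lt (hFd ▸ hi), map_zero]
      have h2 : G.map (PowerSeries.constantCoeff (R := k)) = (X - C c) ^ p := by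
        have := congrArg (fun q => Polynomial.comp q (X - C c)) h1
        simpa [Polynomial.comp_assoc] using this
      have h3 := (monic_X_sub_C c).nextCoeff_pow p
      rw [nextCoeff_X_sub_C, ← h2, nextCoeff_of_natDegree_pos (by
        rw [hGm.natDegree_map, hGd]; exact hp.pos), hGm.natDegree_map, coeff_map,
        ← nextCoeff_of_natDegree_pos (hGd ▸ hp.pos), h0] at h3
      simp [hchar, hcne] at h3
    · obtain ⟨ψ, hψX, hψC⟩ := aux_eval _ F hFdist
        ((algebraMap (LaurentSeries k) E).comp (algebraMap (PowerSeries k) (LaurentSeries k)))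
        (β - algebraMap (LaurentSeries k) E (algebraMap (PowerSeries k) (LaurentSeries k)
          (PowerSeries.C c))) (by
          rw [← Polynomial.eval₂_map]
          simp only [F, Polynomial.map_comp, hG, eval₂_comp]
          simp
          exact minpoly.aeval _ _)
      obtain ⟨r, hr⟩ := IsAlgClosed.exists_pow_nat_eq c hp.pos
      have hr0 : r ≠ 0 := by
        rintro rfl
        exact hcne (by rw [← hr, zero_pow hp.ne_zero])
      obtain ⟨g, hg⟩ := aux_root p hp.ne_zero hpA
        (PowerSeries.X + PowerSeries.C (PowerSeries.C c)) (PowerSeries.C r)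
        ((IsUnit.mk0 r hr0).map _) (by simp [← hr])
      refine ⟨ψ g, ?_⟩
      rw [← map_pow, hg, map_add, hψX, hψC]
      simp

theorem aux_T (k : Type*) [Field k] [IsAlgClosed k] (p : ℕ) (hp : p.Prime)
    (hchar : (p : k) ≠ 0) (t : LaurentSeries k) (ht : t ≠ 0) :
    ∃ (m : ℤ) (s : LaurentSeries k), s ≠ 0 ∧
      t = (HahnSeries.single (1 : ℤ) (1 : k) : LaurentSeries k) ^ m * s ^ p := by
  have hpA : IsUnit (p : k) := IsUnit.mk0 _ hchar
  have hcc : PowerSeries.constantCoeff t.powerSeriesPart ≠ 0 := by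
    rw [← PowerSeries.coeff_zero_eq_constantCoeff_apply, LaurentSeries.powerSeriesPart_coeff]
    simpa using ht
  obtain ⟨r, hr⟩ := IsAlgClosed.exists_pow_nat_eq
    (PowerSeries.constantCoeff t.powerSeriesPart) hp.pos
  have hr0 : r ≠ 0 := by
    rintro rfl
    exact hcc (by rw [← hr, zero_pow hp.ne_zero])
  obtain ⟨g, hg⟩ := aux_root p hp.ne_zero hpA t.powerSeriesPart r (IsUnit.mk0 _ hr0) hr.symm
  have key : t = (HahnSeries.single (1 : ℤ) (1 : k) : LaurentSeries k) ^ t.order *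
      (HahnSeries.ofPowerSeries ℤ k g) ^ p := by
    rw [← map_pow, hg]
    conv_lhs => rw [← LaurentSeries.single_order_mul_powerSeriesPart t]
    congr 1
    exact RatFunc.single_zpow (HahnSeries.order t)
  refine ⟨t.order, HahnSeries.ofPowerSeries ℤ k g, ?_, key⟩
  intro h
  rw [h, zero_pow hp.ne_zero, mul_zero] at key
  exact ht key

theorem aux_z (k : Type*) [Field k] (p : ℕ) (hp : p.Prime) (s : LaurentSeries k) :
    s ^ p ≠ HahnSeries.single (1 : ℤ) (1 : k) := by
  intro h
  have := congrArg HahnSeries.order h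
  rw [HahnSeries.order_pow, HahnSeries.order_single one_ne_zero] at this
  have h2 : (p : ℤ) ∣ 1 := ⟨s.order, by simpa using this.symm⟩
  have h3 := Int.natCast_dvd_natCast.1 (by simpa using h2 : (p : ℤ) ∣ ((1 : ℕ) : ℤ))
  exact hp.one_lt.ne' (Nat.dvd_one.1 h3)

theorem aux_seven (k : Type*) [Field k] [IsAlgClosed k] (p : ℕ) (hp : p.Prime)
    (hchar : (p : k) ≠ 0) (E : Type*) [Field E] [Algebra (LaurentSeries k) E]
    (hE : Module.finrank (LaurentSeries k) E = p) :
    ∃ δ : E, δ ^ p = algebraMap (LaurentSeries k) E (HahnSeries.single (1 : ℤ) (1 : k)) := by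
  have hpK : (p : LaurentSeries k) ≠ 0 := by
    have := (map_ne_zero (algebraMap k (LaurentSeries k))).2 hchar
    simpa using this
  have hfin : FiniteDimensional (LaurentSeries k) E :=
    Module.finite_of_finrank_pos (hE ▸ hp.pos)
  obtain ⟨α, hα0, hαt⟩ : ∃ α : E, α ≠ 0 ∧ Algebra.trace (LaurentSeries k) E α = 0 := by
    have : ∃ x : E, x ∉ (⊥ : IntermediateField (LaurentSeries k) E) := by
      by_contra! hcon
      have : (⊥ : IntermediateField (LaurentSeries k) E) = ⊤ := eq_top_iff.2 fun x _ => hcon x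
      rw [IntermediateField.bot_eq_top_iff_finrank_eq_one, hE] at this
      exact hp.one_lt.ne' this
    obtain ⟨x, hx⟩ := this
    refine ⟨x - algebraMap _ E (Algebra.trace (LaurentSeries k) E x / p), ?_, ?_⟩
    · intro h
      exact hx (IntermediateField.mem_bot.2 ⟨_, (sub_eq_zero.1 h).symm⟩)
    · rw [map_sub, Algebra.trace_algebraMap, hE, nsmul_eq_mul]
      field_simp
      simp
  set z : LaurentSeries k := HahnSeries.single (1 : ℤ) (1 : k) with hz
  have hz0 : z ≠ 0 := by simp [hz]
  have ht0 : Algebra.norm (LaurentSeries k) α ≠ 0 := Algebra.norm_ne_zero_iff.2 hα0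
  set t := Algebra.norm (LaurentSeries k) α with ht
  obtain ⟨m, s, hs0, hts⟩ := aux_T k p hp hchar t ht0
  rw [← hz] at hts
  by_cases hpm : (p : ℤ) ∣ m
  · exfalso
    obtain ⟨n, rfl⟩ := hpm
    have hts' : t = (z ^ n * s) ^ p := by
      rw [hts, mul_pow, mul_comm (p : ℤ), zpow_mul, zpow_natCast]
    have hs'0 : z ^ n * s ≠ 0 := mul_ne_zero (zpow_ne_zero _ hz0) hs0
    refine (aux_five k p hp hchar E hE (algebraMap _ E (z ^ n * s)⁻¹ * α) ?_).1 ?_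
    · rw [map_mul, Algebra.norm_algebraMap, hE, ← ht, inv_pow, ← hts', inv_mul_cancel₀ ht0]
    · rw [← Algebra.smul_def, map_smul, hαt, smul_zero]
  · have htE : algebraMap _ E t ≠ 0 := by simpa using ht0
    obtain ⟨ε, hε⟩ := (aux_five k p hp hchar E hE (algebraMap _ E t⁻¹ * α ^ p) (by
      rw [map_mul, Algebra.norm_algebraMap, hE, map_pow, ← ht, ← mul_pow, inv_mul_cancel₀ ht0,
        one_pow])).2
    have hε0 : ε ≠ 0 := by
      rintro rfl
      rw [zero_pow hp.ne_zero] at hε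
      simp [ht0, hα0, hp.ne_zero] at hε
    have hsE : algebraMap _ E s ≠ 0 := by simpa using hs0
    have hzE : algebraMap _ E z ≠ 0 := by simpa using hz0
    have hzm : (α / (ε * algebraMap _ E s)) ^ p = (algebraMap _ E z) ^ m := by
      rw [div_pow, mul_pow, hε, map_inv₀]
      have : algebraMap _ E t = (algebraMap _ E z) ^ m * (algebraMap _ E s) ^ p := by
        rw [hts]; simp
      rw [div_eq_iff (by simp [ht0, hα0, hs0])]
      rw [this]
      field_simp
    have hcop : IsCoprime m (p : ℤ) :=
      ((Nat.prime_iff_prime_int.1 hp).coprime_iff_not_dvd.2 hpm).symm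
    obtain ⟨a, b, hab⟩ := hcop
    refine ⟨(α / (ε * algebraMap _ E s)) ^ a * (algebraMap _ E z) ^ b, ?_⟩
    rw [mul_pow, ← zpow_natCast, ← zpow_mul, mul_comm a, zpow_mul, zpow_natCast, hzm,
      ← zpow_natCast ((algebraMap _ E z) ^ b), ← zpow_mul, ← zpow_mul, ← zpow_add₀ hzE]
    rw [mul_comm m, hab, zpow_one]

open IntermediateField Polynomial in
theorem aux_deg {K Ω : Type*} [Field K] [Field Ω] [Algebra K Ω] (p : ℕ) (hp : p.Prime)
    (t : K) (ht : ∀ s : K, s ^ p ≠ t) (β : Ω) (hβ : β ^ p = algebraMap K Ω t) :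
    Module.finrank K (adjoin K {β}) = p := by
  have hirr := X_pow_sub_C_irreducible_of_prime hp ht
  have hm := monic_X_pow_sub_C t hp.ne_zero
  have h0 : aeval β (X ^ p - C t) = 0 := by simp [hβ]
  rw [adjoin.finrank ⟨_, hm, h0⟩, ← minpoly.eq_of_irreducible_of_monic hirr h0 hm]
  simp

open IntermediateField in
theorem aux_uniq {K Ω : Type*} [Field K] [Field Ω] [Algebra K Ω] (p : ℕ) (hp : p.Prime)
    (ζ : K) (hζ : IsPrimitiveRoot ζ p)
    (t : K) (ht0 : t ≠ 0) (ht : ∀ s : K, s ^ p ≠ t) (β β' : Ω) (hβ : β ^ p = algebraMap K Ω t)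
    (hβ' : β' ^ p = algebraMap K Ω t) : adjoin K {β} = adjoin K {β'} := by
  have : NeZero p := ⟨hp.ne_zero⟩
  have hd := aux_deg p hp t ht β hβ
  have hd' := aux_deg p hp t ht β' hβ'
  have : FiniteDimensional K (adjoin K {β'}) := Module.finite_of_finrank_pos (hd' ▸ hp.pos)
  refine eq_of_le_of_finrank_eq ?_ (hd.trans hd'.symm)
  rw [adjoin_simple_le_iff]
  have htΩ : algebraMap K Ω t ≠ 0 := by simpa using ht0
  have hβ'0 : β' ≠ 0 := by
    rintro rfl
    rw [zero_pow hp.ne_zero] at hβ'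
    exact htΩ hβ'.symm
  obtain ⟨i, -, hi⟩ := (hζ.map_of_injective (algebraMap K Ω).injective).eq_pow_of_pow_eq_one
    (ξ := β / β') (by rw [div_pow, hβ, hβ', div_self htΩ])
  have : β = algebraMap K Ω (ζ ^ i) * β' := by
    rw [map_pow, hi, div_mul_cancel₀ _ hβ'0]
  rw [this]
  exact mul_mem (_root_.algebraMap_mem _ _) (mem_adjoin_simple_self K β')


/-- Formal Puiseux theorem: for `K = k((z))`, `k` algebraically closed of
characteristic `≠ p`, inside a fixed algebraic closure there is exactly one field extension
of `K` of degree `p`; it is Galois with cyclic Galois group, and it is generated by a `p`-th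
root of any element of `K^*` which is not a `p`-th power. -/
theorem stmt5 (k : Type*) [Field k] [IsAlgClosed k] (p : ℕ) (hp : p.Prime)
    (hchar : (p : k) ≠ 0) :
    (∃! E : IntermediateField (LaurentSeries k) (AlgebraicClosure (LaurentSeries k)),
      Module.finrank (LaurentSeries k) ↥E = p) ∧
    ∀ E : IntermediateField (LaurentSeries k) (AlgebraicClosure (LaurentSeries k)),
      Module.finrank (LaurentSeries k) ↥E = p →
      IsGalois (LaurentSeries k) ↥E ∧
      IsCyclic (↥E ≃ₐ[LaurentSeries k] ↥E) ∧
      ∀ t : LaurentSeries k, t ≠ 0 → (¬ ∃ s : LaurentSeries k, s ^ p = t) →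
        ∀ β : AlgebraicClosure (LaurentSeries k),
          β ^ p = algebraMap (LaurentSeries k) (AlgebraicClosure (LaurentSeries k)) t →
          IntermediateField.adjoin (LaurentSeries k) {β} = E := by
  have hpK : (p : LaurentSeries k) ≠ 0 := by
    have := (map_ne_zero (algebraMap k (LaurentSeries k))).2 hchar
    simpa using this
  have : NeZero p := ⟨hp.ne_zero⟩
  have : NeZero (p : k) := ⟨hchar⟩
  obtain ⟨ζ0, hζ0⟩ := HasEnoughRootsOfUnity.exists_primitiveRoot k p
  have hζ := hζ0.map_of_injective (algebraMap k (LaurentSeries k)).injective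
  have hz0 : (HahnSeries.single (1 : ℤ) (1 : k) : LaurentSeries k) ≠ 0 := by simp
  have hz := aux_z k p hp
  obtain ⟨δ, hδ⟩ := IsAlgClosed.exists_pow_nat_eq (algebraMap (LaurentSeries k)
    (AlgebraicClosure (LaurentSeries k)) (HahnSeries.single (1 : ℤ) (1 : k))) hp.pos
  have hδdeg := aux_deg p hp _ hz δ hδ
  have huniq : ∀ E : IntermediateField (LaurentSeries k) (AlgebraicClosure (LaurentSeries k)),
      Module.finrank (LaurentSeries k) ↥E = p →
      E = IntermediateField.adjoin (LaurentSeries k) {δ} := by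
    intro E hE
    obtain ⟨δ', hδ'⟩ := aux_seven k p hp hchar E hE
    have hδ'' : (δ' : AlgebraicClosure (LaurentSeries k)) ^ p = algebraMap (LaurentSeries k)
        (AlgebraicClosure (LaurentSeries k)) (HahnSeries.single (1 : ℤ) (1 : k)) := by
      have := congrArg (algebraMap E (AlgebraicClosure (LaurentSeries k))) hδ'
      rw [map_pow, ← IsScalarTower.algebraMap_apply] at this
      exact this
    have : FiniteDimensional (LaurentSeries k) E := Module.finite_of_finrank_pos (hE ▸ hp.pos)
    rw [aux_uniq p hp _ hζ _ hz0 hz δ _ hδ hδ'']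
    symm
    refine IntermediateField.eq_of_le_of_finrank_eq ?_ ((aux_deg p hp _ hz _ hδ'').trans hE.symm)
    rw [IntermediateField.adjoin_simple_le_iff]
    exact δ'.2
  refine ⟨⟨_, hδdeg, huniq⟩, fun E hE => ?_⟩
  obtain ⟨δ', hδ'⟩ := aux_seven k p hp hchar E hE
  have hfin : FiniteDimensional (LaurentSeries k) E := Module.finite_of_finrank_pos (hE ▸ hp.pos)
  have hirr := X_pow_sub_C_irreducible_of_prime hp hz
  have htop : IntermediateField.adjoin (LaurentSeries k) {δ'} = ⊤ := by
    refine IntermediateField.eq_of_le_of_finrank_eq le_top ?_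
    rw [aux_deg p hp _ hz δ' hδ', IntermediateField.finrank_top', hE]
  have hprim : (primitiveRoots p (LaurentSeries k)).Nonempty :=
    ⟨_, (mem_primitiveRoots hp.pos).2 hζ⟩
  have hspl := isSplittingField_X_pow_sub_C_of_root_adjoin_eq_top (K := LaurentSeries k) (L := E)
    (by rw [hE]; exact hprim) (by rw [hE]; exact hδ') htop
  rw [hE] at hspl
  refine ⟨isGalois_of_isSplittingField_X_pow_sub_C hprim hirr E,
    isCyclic_of_isSplittingField_X_pow_sub_C hprim hirr E, ?_⟩
  intro t ht0 ht β hβ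
  rw [huniq E hE]
  exact huniq _ (aux_deg p hp t (fun s hs => ht ⟨s, hs⟩) β hβ)
end

section
/- Let $\mathbb{A}_X$ be the adele ring of a smooth projective curve over an algebraically closed field, $n$ prime to the characteristic, and $\t_1, \t_2$ two ideles (units of $\mathbb{A}_X$). Then $\mathbb{A}_X[T]/(T^n - \t_1)$ and $\mathbb{A}_X[T]/(T^n - \t_2)$ are isomorphic as $\mathbb{A}_X$-algebras if and only if for every closed point $x$, $\gcd(n, v_x(t_{1,x})) = \gcd(n, v_x(t_{2,x}))$. -/
/-- The geometric adele ring of a family of Laurent series fields indexed by the closed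
points: the subring of `∏ₓ k((z))` of families whose component lies in `k[[z]]` for all
but finitely many `x`. (Over an algebraically closed field every completed local field of
the curve is isomorphic to `k((z))`.) -/
noncomputable def adeleSubring (k : Type*) [Field k] (X : Type*) : Subring (X → LaurentSeries k) where
  carrier := {f | {x : X | f x ∉ (HahnSeries.ofPowerSeries ℤ k).range}.Finite}
  zero_mem' := by
    apply Set.Finite.subset Set.finite_empty
    intro x hx
    exact absurd (Subring.zero_mem _) hx
  one_mem' := by
    apply Set.Finite.subset Set.finite_empty
    intro x hx
    exact absurd (Subring.one_mem _) hx
  add_mem' := by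
    intro f g hf hg
    apply Set.Finite.subset (hf.union hg)
    intro x hx
    by_contra hc
    simp only [Set.mem_union, Set.mem_setOf_eq, not_or, not_not] at hc
    exact hx (Subring.add_mem _ hc.1 hc.2)
  mul_mem' := by
    intro f g hf hg
    apply Set.Finite.subset (hf.union hg)
    intro x hx
    by_contra hc
    simp only [Set.mem_union, Set.mem_setOf_eq, not_or, not_not] at hc
    exact hx (Subring.mul_mem _ hc.1 hc.2)
  neg_mem' := by
    intro f hf
    apply Set.Finite.subset hf
    intro x hx
    by_contra hc
    simp only [Set.mem_setOf_eq, not_not] at hc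
    exact hx (Subring.neg_mem _ hc)

/-- Evaluation of an adele at the closed point `x`, with values in the completed local
field `K_x = k((z))`. -/
noncomputable def adeleEval (k : Type*) [Field k] (X : Type*) (x : X) :
    adeleSubring k X →+* LaurentSeries k :=
  (Pi.evalRingHom (fun _ : X => LaurentSeries k) x).comp (Subring.subtype _)


theorem ps_root (k : Type*) [Field k] [IsAlgClosed k] (n : ℕ) (hn : 0 < n)
    (hchar : (n : k) ≠ 0) (p : PowerSeries k) (hp : PowerSeries.constantCoeff p ≠ 0) :
    ∃ q : PowerSeries k, q ^ n = p := by
  obtain ⟨c, hc⟩ := IsAlgClosed.exists_pow_nat_eq (PowerSeries.constantCoeff p) hn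
  have hc0 : c ≠ 0 := by
    rintro rfl
    rw [zero_pow hn.ne'] at hc
    exact hp hc.symm
  obtain ⟨a, ha, -⟩ := HenselianRing.is_henselian (I := Ideal.span {(PowerSeries.X : PowerSeries k)})
    (Polynomial.X ^ n - Polynomial.C p) (Polynomial.monic_X_pow_sub_C p hn.ne')
    (PowerSeries.C c) (by
      rw [Ideal.mem_span_singleton, PowerSeries.X_dvd_iff]
      simp [hc]) (by
      apply IsUnit.map
      rw [PowerSeries.isUnit_iff_constantCoeff]
      simp [hc0, hchar, Polynomial.derivative_X_pow])
  refine ⟨a, ?_⟩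
  simpa [sub_eq_zero] using ha

theorem ls_root (k : Type*) [Field k] [IsAlgClosed k] (n : ℕ) (hn : 0 < n)
    (hchar : (n : k) ≠ 0) (f : LaurentSeries k) (hf : f ≠ 0) (m : ℤ) (hm : f.order = n * m) :
    ∃ g : LaurentSeries k, g ^ n = f := by
  obtain ⟨q, hq⟩ := ps_root k n hn hchar f.powerSeriesPart (by
    rw [← PowerSeries.coeff_zero_eq_constantCoeff_apply, LaurentSeries.powerSeriesPart_coeff]
    simpa [HahnSeries.coeff_order_eq_zero] using hf)
  refine ⟨HahnSeries.single m 1 * HahnSeries.ofPowerSeries ℤ k q, ?_⟩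
  rw [mul_pow, ← map_pow (HahnSeries.ofPowerSeries ℤ k), hq, HahnSeries.single_pow, one_pow]
  conv_rhs => rw [← f.single_order_mul_powerSeriesPart]
  rw [hm]; simp

theorem ls_ord0 (k : Type*) [Field k] (f : LaurentSeries k) (hf : f.order = 0) :
    f ∈ (HahnSeries.ofPowerSeries ℤ k).range := by
  refine ⟨f.powerSeriesPart, ?_⟩
  rw [LaurentSeries.ofPowerSeries_powerSeriesPart, hf]; simp

theorem ls_ord_nonneg (k : Type*) [Field k] (f : LaurentSeries k)
    (hf : f ∈ (HahnSeries.ofPowerSeries ℤ k).range) : 0 ≤ f.order := by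
  obtain ⟨p, rfl⟩ := hf
  by_contra! h
  have hne : HahnSeries.ofPowerSeries ℤ k p ≠ 0 := by
    intro h0; rw [h0] at h; simp at h
  apply hne
  rw [← HahnSeries.coeff_order_eq_zero, HahnSeries.ofPowerSeries_apply]
  apply HahnSeries.embDomain_of_notMem_range
  rintro ⟨a, ha⟩
  rw [HahnSeries.ofPowerSeries_apply] at h
  rw [← ha] at h
  simp at h
  omega

theorem ram (k : Type*) [Field k] (m : ℕ) (hm : 0 < m) :
    ∃ φ : LaurentSeries k →+* LaurentSeries k, ∀ f, (φ f).order = m * f.order := by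
  have hm' : (0 : ℤ) < m := by exact_mod_cast hm
  refine ⟨HahnSeries.embDomainRingHom (AddMonoidHom.mulLeft (m : ℤ))
    (fun a b h => by simpa [hm.ne'] using h) (fun a b => by simp [hm]), fun f => ?_⟩
  by_cases hf : f = 0
  · simp [hf]
  have hne := (map_ne_zero_iff (HahnSeries.embDomainRingHom (R := k) (AddMonoidHom.mulLeft (m : ℤ))
    (fun a b h => by simpa [hm.ne'] using h) (fun a b => by simp [hm])) (RingHom.injective _)).2 hf
  have h1 := HahnSeries.order_eq_orderTop_of_ne_zero hne
  have : (HahnSeries.embDomainRingHom (R := k) (AddMonoidHom.mulLeft (m : ℤ))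
    (fun a b h => by simpa [hm.ne'] using h) (fun a b => by simp [hm]) f).orderTop = ((m * f.order : ℤ) : WithTop ℤ) := by
    erw [HahnSeries.orderTop_embDomain]
    rw [← HahnSeries.order_eq_orderTop_of_ne_zero hf]
    rfl
  rw [this] at h1
  exact_mod_cast h1

theorem arith (n : ℕ) (hn : 0 < n) (a b : ℤ) (h : Int.gcd n a = Int.gcd n b) :
    ∃ r < n + 1, (0 < r ∧ r.Coprime n) ∧ (n : ℤ) ∣ b - r * a := by
  have : NeZero n := ⟨hn.ne'⟩
  by_cases hn1 : n = 1
  · subst hn1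
    exact ⟨1, by simp⟩
  have key : ∀ a : ℤ, ∃ u : (ZMod n)ˣ, (a : ZMod n) = u * (Int.gcd n a : ℕ) := by
    intro a
    obtain ⟨d, hd, u, hu, hau⟩ := (a : ZMod n).eq_unit_mul_divisor
    obtain ⟨u, rfl⟩ := hu
    refine ⟨u, ?_⟩
    have : Int.gcd n a = d := by
      apply Nat.dvd_antisymm
      · have h1 : (d : ZMod n) = (u⁻¹ : (ZMod n)ˣ) * a := by rw [hau]; simp
        have h2 : ((Int.gcd n a : ℕ) : ℤ) ∣ d := by
          have h3 : (((d : ℤ) - ((u⁻¹ : (ZMod n)ˣ) : ZMod n).val * a : ℤ) : ZMod n) = 0 := by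
            push_cast
            rw [ZMod.natCast_zmod_val, h1, sub_self]
          rw [ZMod.intCast_zmod_eq_zero_iff_dvd] at h3
          have h4 := (Int.gcd_dvd_left (n : ℤ) a).trans h3
          exact (dvd_sub_left ((Int.gcd_dvd_right (n : ℤ) a).mul_left _)).1 h4
        exact_mod_cast h2
      · apply Int.dvd_gcd (by exact_mod_cast hd)
        have h3 : ((a - (u : ZMod n).val * d : ℤ) : ZMod n) = 0 := by
          push_cast
          rw [ZMod.natCast_zmod_val, hau, sub_self]
        rw [ZMod.intCast_zmod_eq_zero_iff_dvd] at h3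
        have h4 : (d : ℤ) ∣ _ := (Int.natCast_dvd_natCast.2 hd).trans h3
        exact (dvd_sub_left (dvd_mul_left _ _)).1 h4
    rw [this, hau]
  obtain ⟨u, hu⟩ := key a
  obtain ⟨w, hw⟩ := key b
  refine ⟨((w * u⁻¹ : (ZMod n)ˣ) : ZMod n).val, (ZMod.val_lt _).trans (by omega),
    ⟨Nat.pos_of_ne_zero fun h0 => hn1 ?_, ZMod.val_coe_unit_coprime _⟩, ?_⟩
  · have := ZMod.val_coe_unit_coprime (w * u⁻¹ : (ZMod n)ˣ)
    rw [h0] at this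
    simpa using this
  rw [← ZMod.intCast_zmod_eq_zero_iff_dvd]
  push_cast
  rw [ZMod.natCast_zmod_val, hu, hw, h]
  simp [mul_assoc]

open Polynomial in
theorem glue (A : Type*) [CommRing A] [Nontrivial A] (n N : ℕ) (hn : 0 < n) (t₁ t₂ c : Aˣ)
    (e : ℕ → A) (he1 : ∑ j ∈ Finset.range N, e j = 1) (he : ∀ i j, i ≠ j → e i * e j = 0)
    (hcop : ∀ j, e j ≠ 0 → 0 < j ∧ j.Coprime n)
    (hc : ∀ j, e j * (c ^ n * t₁ ^ j) = e j * t₂) :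
    Nonempty (AdjoinRoot (X ^ n - C (t₁ : A)) ≃ₐ[A] AdjoinRoot (X ^ n - C (t₂ : A))) := by
  have hm : ∀ t : A, (X ^ n - C t).Monic := fun t => monic_X_pow_sub_C t hn.ne'
  let B := AdjoinRoot (X ^ n - C (t₁ : A))
  let τ : B := AdjoinRoot.root _
  have hτ : τ ^ n = algebraMap A B t₁ := by
    have := AdjoinRoot.eval₂_root (X ^ n - C (t₁ : A))
    simp only [eval₂_sub, eval₂_X_pow, eval₂_C, sub_eq_zero] at this
    exact this
  have idem : ∀ i ∈ Finset.range N, e i * e i = e i := by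
    intro i hi
    conv_rhs => rw [← mul_one (e i), ← he1, Finset.mul_sum]
    rw [Finset.sum_eq_single_of_mem i hi (fun j _ hj => he _ _ hj.symm)]
  let σ : B := ∑ j ∈ Finset.range N, algebraMap A B (e j) * (algebraMap A B c * τ ^ j)
  have hσ : ∀ i ∈ Finset.range N, algebraMap A B (e i) * σ =
      algebraMap A B (e i) * (algebraMap A B c * τ ^ i) := by
    intro i hi
    simp only [σ]
    rw [Finset.mul_sum, Finset.sum_eq_single_of_mem i hi]
    · rw [← mul_assoc, ← map_mul, idem i hi]
    · intro j _ hj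
      rw [← mul_assoc, ← map_mul, he _ _ hj.symm, map_zero, zero_mul]
  have hσp : ∀ i ∈ Finset.range N, ∀ m : ℕ, algebraMap A B (e i) * σ ^ m =
      algebraMap A B (e i) * (algebraMap A B c * τ ^ i) ^ m := by
    intro i hi m
    induction m with
    | zero => simp
    | succ m ih =>
      rw [pow_succ, ← mul_assoc, ih, mul_right_comm, hσ i hi, pow_succ]; ring
  have hext : ∀ a b : B, (∀ i ∈ Finset.range N, algebraMap A B (e i) * a =
      algebraMap A B (e i) * b) → a = b := by
    intro a b h
    rw [← one_mul a, ← one_mul b, ← map_one (algebraMap A B), ← he1, map_sum, Finset.sum_mul,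
      Finset.sum_mul]
    exact Finset.sum_congr rfl h
  have hσn : σ ^ n = algebraMap A B t₂ := by
    apply hext
    intro i hi
    rw [hσp i hi, mul_pow, ← pow_mul, mul_comm i n, pow_mul, hτ, ← map_pow, ← map_pow, ← map_mul,
      ← map_mul, ← map_mul, hc]
  let F : AdjoinRoot (X ^ n - C (t₂ : A)) →ₐ[A] B :=
    AdjoinRoot.liftAlgHom _ (Algebra.ofId A B) σ (by
      simp [hσn, Algebra.ofId_apply])
  have hF : F (AdjoinRoot.root _) = σ := by simp [F]
  have hFs : Function.Surjective F := by
    rw [← AlgHom.range_eq_top, eq_top_iff, ← AdjoinRoot.adjoinRoot_eq_top, Algebra.adjoin_le_iff,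
      Set.singleton_subset_iff]
    change τ ∈ F.range
    have hσr : σ ∈ F.range := ⟨_, hF⟩
    have : τ = ∑ i ∈ Finset.range N, algebraMap A B (e i) * τ := by
      rw [← Finset.sum_mul, ← map_sum, he1, map_one, one_mul]
    rw [this]
    refine Subalgebra.sum_mem _ fun i hi => ?_
    by_cases h0 : e i = 0
    · rw [h0]; simp
    obtain ⟨s, hs⟩ : ∃ s : ℕ, ∃ q : ℕ, i * s = 1 + n * q := by
      have hco := hcop i h0
      obtain ⟨hi0, hco⟩ := hco
      rcases Nat.lt_or_ge 1 n with h1 | h1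
      · obtain ⟨s, -, hs⟩ := Nat.exists_mul_mod_eq_one_of_coprime hco h1
        exact ⟨s, i * s / n, by rw [← hs, Nat.mod_add_div]⟩
      · obtain rfl : n = 1 := by omega
        exact ⟨1, i - 1, by omega⟩
    obtain ⟨q, hq⟩ := hs
    have : algebraMap A B (e i) * τ = algebraMap A B (e i) * σ ^ s *
        algebraMap A B ((c⁻¹ ^ s * t₁⁻¹ ^ q : Aˣ) : A) := by
      rw [hσp i hi, mul_pow, ← pow_mul, hq, pow_add, pow_mul, hτ, pow_one]
      simp only [← map_pow]
      have : algebraMap A B ((c:A) ^ s * (t₁:A) ^ q) *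
        algebraMap A B ((c⁻¹ ^ s * t₁⁻¹ ^ q : Aˣ) : A) = 1 := by
        rw [← map_mul, ← Units.val_pow_eq_pow_val, ← Units.val_pow_eq_pow_val, ← Units.val_mul,
          ← Units.val_mul]
        rw [inv_pow, inv_pow, ← mul_inv, mul_inv_cancel, Units.val_one, map_one]
      rw [map_mul] at this
      linear_combination (- algebraMap A B (e i) * τ) * this
    rw [this]
    exact mul_mem (mul_mem (Subalgebra.algebraMap_mem _ _) (pow_mem hσr _))
      (Subalgebra.algebraMap_mem _ _)
  have E : AdjoinRoot (X ^ n - C (t₂ : A)) ≃ₗ[A] B :=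
    (AdjoinRoot.powerBasis' (hm t₂)).basis.equiv (AdjoinRoot.powerBasis' (hm t₁)).basis
      (finCongr (by simp))
  have : Module.Finite A B := .of_basis (AdjoinRoot.powerBasis' (hm t₁)).basis
  have hFi : Function.Injective F :=
    OrzechProperty.injective_of_surjective_of_injective E.toLinearMap F.toLinearMap E.injective hFs
  exact ⟨(AlgEquiv.ofBijective F ⟨hFi, hFs⟩).symm⟩

theorem mem_adele (k : Type*) [Field k] (X : Type*) (f : X → LaurentSeries k) :
    f ∈ adeleSubring k X ↔ {x : X | f x ∉ (HahnSeries.ofPowerSeries ℤ k).range}.Finite := Iff.rfl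

theorem idele_ne (k : Type*) [Field k] (X : Type*) (t : (adeleSubring k X)ˣ) (x : X) :
    ((t : adeleSubring k X) : X → LaurentSeries k) x ≠ 0 :=
  (t.isUnit.map (adeleEval k X x)).ne_zero

theorem idele_ord (k : Type*) [Field k] (X : Type*) (t : (adeleSubring k X)ˣ) :
    {x : X | (((t : adeleSubring k X) : X → LaurentSeries k) x).order ≠ 0}.Finite := by
  have h1 := (mem_adele k X _).1 (t : adeleSubring k X).2
  have h2 := (mem_adele k X _).1 ((t⁻¹ : (adeleSubring k X)ˣ) : adeleSubring k X).2
  refine (h1.union h2).subset fun x hx => ?_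
  by_contra hc
  simp only [Set.mem_union, Set.mem_setOf_eq, not_or, not_not] at hc
  apply hx
  have e1 := ls_ord_nonneg k _ hc.1
  have e2 := ls_ord_nonneg k _ hc.2
  have : ((t : adeleSubring k X) : X → LaurentSeries k) x *
      (((t⁻¹ : (adeleSubring k X)ˣ) : adeleSubring k X) : X → LaurentSeries k) x = 1 := by
    have := congrArg (adeleEval k X x) t.mul_inv
    rw [map_mul, map_one] at this
    exact this
  have h3 := HahnSeries.order_mul (idele_ne k X t x) (idele_ne k X t⁻¹ x)
  rw [this, HahnSeries.order_one] at h3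
  omega

theorem mk_idele (k : Type*) [Field k] (X : Type*) (w : X → LaurentSeries k)
    (hw : ∀ x, w x ≠ 0) (hf : {x | (w x).order ≠ 0}.Finite) :
    ∃ c : (adeleSubring k X)ˣ, ∀ x, ((c : adeleSubring k X) : X → LaurentSeries k) x = w x := by
  refine ⟨⟨⟨w, ?_⟩, ⟨fun x => (w x)⁻¹, ?_⟩, ?_, ?_⟩, fun x => rfl⟩
  · refine hf.subset fun x hx h0 => hx (ls_ord0 k _ h0)
  · refine hf.subset fun x hx h0 => hx (ls_ord0 k _ ?_)
    have h3 := HahnSeries.order_mul (hw x) (inv_ne_zero (hw x))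
    rw [mul_inv_cancel₀ (hw x), HahnSeries.order_one, h0, zero_add] at h3
    exact h3.symm
  · ext1; funext x; exact mul_inv_cancel₀ (hw x)
  · ext1; funext x; exact inv_mul_cancel₀ (hw x)

theorem fwd (k : Type*) [Field k] [IsAlgClosed k] (X : Type*) (n : ℕ) (hn : 0 < n)
    (hchar : (n : k) ≠ 0) (t₁ t₂ : (adeleSubring k X)ˣ)
    (F : AdjoinRoot (Polynomial.X ^ n - Polynomial.C ((t₁ : adeleSubring k X)))
        →ₐ[adeleSubring k X]
       AdjoinRoot (Polynomial.X ^ n - Polynomial.C ((t₂ : adeleSubring k X)))) (x : X) :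
      Int.gcd n (HahnSeries.order (((t₂ : adeleSubring k X) : X → LaurentSeries k) x)) ∣
      Int.gcd n (HahnSeries.order (((t₁ : adeleSubring k X) : X → LaurentSeries k) x)) := by
  set v₁ := HahnSeries.order (((t₁ : adeleSubring k X) : X → LaurentSeries k) x) with hv₁
  set v₂ := HahnSeries.order (((t₂ : adeleSubring k X) : X → LaurentSeries k) x) with hv₂
  set d := Int.gcd n v₂ with hd
  have hdn : d ∣ n := by exact_mod_cast Int.gcd_dvd_left (n : ℤ) v₂
  have hdv : (d : ℤ) ∣ v₂ := Int.gcd_dvd_right (n : ℤ) v₂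
  obtain ⟨m, hm⟩ := hdn
  obtain ⟨a, ha⟩ := hdv
  have hm0 : 0 < m := Nat.pos_of_ne_zero (by rintro rfl; simp at hm; omega)
  obtain ⟨φ, hφ⟩ := ram k m hm0
  let ψ : adeleSubring k X →+* LaurentSeries k := φ.comp (adeleEval k X x)
  obtain ⟨g, hg⟩ := ls_root k n hn hchar (ψ t₂) (t₂.isUnit.map ψ).ne_zero a (by
    change (φ (((t₂ : adeleSubring k X) : X → LaurentSeries k) x)).order = _
    rw [hφ, ← hv₂, ha, hm]; push_cast; ring)
  let G : AdjoinRoot (Polynomial.X ^ n - Polynomial.C ((t₂ : adeleSubring k X))) →+*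
    LaurentSeries k := AdjoinRoot.lift ψ g (by simp [hg])
  have hr : (AdjoinRoot.root (Polynomial.X ^ n - Polynomial.C ((t₁ : adeleSubring k X)))) ^ n =
      algebraMap (adeleSubring k X) _ (t₁ : adeleSubring k X) := by
    have := AdjoinRoot.eval₂_root (Polynomial.X ^ n - Polynomial.C (t₁ : adeleSubring k X))
    simp only [Polynomial.eval₂_sub, Polynomial.eval₂_X_pow, Polynomial.eval₂_C,
      sub_eq_zero] at this
    exact this
  have h2 := congrArg (fun y => G (F y)) hr
  simp only [map_pow, AlgHom.commutes] at h2
  have h3 : G (algebraMap (adeleSubring k X) _ (t₁ : adeleSubring k X)) = ψ t₁ :=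
    AdjoinRoot.lift_of _
  rw [h3] at h2
  have h4 := congrArg HahnSeries.order h2
  have h5 : (ψ t₁).order = m * v₁ := hφ _
  rw [h5, HahnSeries.order_pow, nsmul_eq_mul] at h4
  have hmz : (n : ℤ) = d * m := by exact_mod_cast hm
  apply Int.dvd_gcd
  · exact Int.gcd_dvd_left (n : ℤ) v₂
  · refine ⟨(G (F (AdjoinRoot.root _))).order, ?_⟩
    have : (m : ℤ) ≠ 0 := by exact_mod_cast hm0.ne'
    apply mul_left_cancel₀ this
    rw [← h4, hmz]; ring

theorem bwd (k : Type*) [Field k] [IsAlgClosed k] (X : Type*) [Nonempty X] (n : ℕ) (hn : 0 < n)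
    (hchar : (n : k) ≠ 0) (t₁ t₂ : (adeleSubring k X)ˣ)
    (h : ∀ x : X,
      Int.gcd n (HahnSeries.order (((t₁ : adeleSubring k X) : X → LaurentSeries k) x)) =
      Int.gcd n (HahnSeries.order (((t₂ : adeleSubring k X) : X → LaurentSeries k) x))) :
    Nonempty
      (AdjoinRoot (Polynomial.X ^ n - Polynomial.C ((t₁ : adeleSubring k X)))
        ≃ₐ[adeleSubring k X]
       AdjoinRoot (Polynomial.X ^ n - Polynomial.C ((t₂ : adeleSubring k X)))) := by
  classical
  have key : ∀ x, ∃ r < n + 1, (0 < r ∧ r.Coprime n) ∧ ∃ w : LaurentSeries k,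
      w ^ n * (((t₁ : adeleSubring k X) : X → LaurentSeries k) x) ^ r =
      ((t₂ : adeleSubring k X) : X → LaurentSeries k) x := by
    intro x
    obtain ⟨r, hr, hr2, m, hm⟩ := arith n hn _ _ (h x)
    refine ⟨r, hr, hr2, ?_⟩
    have n1 := idele_ne k X t₁ x
    have n2 := idele_ne k X t₂ x
    have n3 := pow_ne_zero r n1
    have n4 := div_ne_zero n2 n3
    obtain ⟨w, hw⟩ := ls_root k n hn hchar _ n4 m (by
      have := HahnSeries.order_mul n4 n3
      rw [div_mul_cancel₀ _ n3, HahnSeries.order_pow, nsmul_eq_mul] at this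
      rw [← hm, this]; push_cast; ring)
    exact ⟨w, by rw [hw, div_mul_cancel₀ _ n3]⟩
  choose r hr hr2 w hw using key
  have hw0 : ∀ x, w x ≠ 0 := by
    intro x h0
    apply idele_ne k X t₂ x
    rw [← hw x, h0, zero_pow hn.ne', zero_mul]
  obtain ⟨c, hc⟩ := mk_idele k X w hw0 (by
    refine ((idele_ord k X t₁).union (idele_ord k X t₂)).subset fun x hx => ?_
    by_contra hcon
    simp only [Set.mem_union, Set.mem_setOf_eq, not_or, not_not] at hcon
    apply hx
    have := congrArg HahnSeries.order (hw x)
    rw [HahnSeries.order_mul (pow_ne_zero _ (hw0 x)) (pow_ne_zero _ (idele_ne k X t₁ x)),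
      HahnSeries.order_pow, HahnSeries.order_pow, hcon.1, hcon.2] at this
    simpa [hn.ne'] using this)
  have : Nontrivial (adeleSubring k X) := by
    obtain ⟨x⟩ := ‹Nonempty X›
    exact (adeleEval k X x).domain_nontrivial
  let e : ℕ → adeleSubring k X := fun j => ⟨fun x => if r x = j then 1 else 0, by
    rw [mem_adele]
    convert Set.finite_empty
    ext x
    simp only [Set.mem_setOf_eq, Set.mem_empty_iff_false, iff_false, not_not]
    split_ifs
    · exact one_mem _
    · exact zero_mem _⟩
  have hev : ∀ j x, adeleEval k X x (e j) = if r x = j then 1 else 0 := fun j x => rfl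
  have hext : ∀ a b : adeleSubring k X, (∀ x, adeleEval k X x a = adeleEval k X x b) → a = b :=
    fun a b hab => Subtype.ext (funext hab)
  refine glue _ n (n + 1) hn t₁ t₂ c e ?_ ?_ ?_ ?_
  · apply hext
    intro x
    rw [map_sum, map_one]
    simp only [hev]
    rw [Finset.sum_ite_eq, if_pos (Finset.mem_range.2 (hr x))]
  · intro i j hij
    apply hext
    intro x
    rw [map_mul, map_zero, hev, hev]
    split_ifs <;> simp_all
  · intro j hj
    by_contra hcon
    apply hj
    apply hext
    intro x
    rw [hev, map_zero, if_neg]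
    rintro rfl
    exact hcon (hr2 x)
  · intro j
    apply hext
    intro x
    rw [map_mul, map_mul, map_mul, map_pow, map_pow, hev]
    split_ifs with hx
    · rw [one_mul, one_mul, ← hx]
      have := hw x
      rw [← hc x] at this
      exact this
    · rw [zero_mul, zero_mul]

/-- for ideles `𝔱₁, 𝔱₂` (units of the adele ring `𝔸_X`) and `n` prime to
the characteristic, `𝔸_X[T]/(Tⁿ - 𝔱₁) ≅ 𝔸_X[T]/(Tⁿ - 𝔱₂)` as `𝔸_X`-algebras iff
`gcd(n, vₓ(t₁ₓ)) = gcd(n, vₓ(t₂ₓ))` at every closed point `x`. -/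
theorem stmt13 (k : Type*) [Field k] [IsAlgClosed k] (X : Type*) (n : ℕ) (hn : 0 < n)
    (hchar : (n : k) ≠ 0) (t₁ t₂ : (adeleSubring k X)ˣ) :
    Nonempty
      (AdjoinRoot (Polynomial.X ^ n - Polynomial.C ((t₁ : adeleSubring k X)))
        ≃ₐ[adeleSubring k X]
       AdjoinRoot (Polynomial.X ^ n - Polynomial.C ((t₂ : adeleSubring k X)))) ↔
    ∀ x : X,
      Int.gcd n (HahnSeries.order (((t₁ : adeleSubring k X) : X → LaurentSeries k) x)) =
      Int.gcd n (HahnSeries.order (((t₂ : adeleSubring k X) : X → LaurentSeries k) x)) := by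
  constructor
  · rintro ⟨E⟩ x
    exact Nat.dvd_antisymm (fwd k X n hn hchar t₂ t₁ E.symm.toAlgHom x)
      (fwd k X n hn hchar t₁ t₂ E.toAlgHom x)
  · intro h
    rcases isEmpty_or_nonempty X with hX | hX
    · have : t₁ = t₂ := by
        ext1; ext1; funext x; exact hX.elim x
      rw [this]
      exact ⟨AlgEquiv.refl⟩
    · exact bwd k X n hn hchar t₁ t₂ h
end
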